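/- Let S ⊆ ℤ² be a nonempty subset connected with respect to grid adjacency, let v ∈ ℤ² be a nonzero vector, let n ≥ 1 be an integer, and let p ∈ ℤ² satisfy p ∈ S and p + n·v ∈ S. Then S intersects its translate by v, i.e., S ∩ (S + v) ≠ ∅. -/

import Mathlib

/-- Grid adjacency on ℤ²: two points are adjacent iff their ℓ¹-distance is 1. -/
def GridAdj (p q : ℤ × ℤ) : Prop := |p.1 - q.1| + |p.2 - q.2| = 1

/-- A subset of ℤ² is grid-connected if any two of its points are joined by a
path of adjacent points staying inside the set. -/
def GridConnected (S : Set (ℤ × ℤ)) : Prop :=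
  ∀ p ∈ S, ∀ q ∈ S,
    Relation.ReflTransGen (fun a b => GridAdj a b ∧ a ∈ S ∧ b ∈ S) p q

/-- Translate of a subset of ℤ² by a vector. -/
def setTranslate (S : Set (ℤ × ℤ)) (v : ℤ × ℤ) : Set (ℤ × ℤ) := (· + v) '' S


lemma gridAdj_cases {p q : ℤ × ℤ} (h : GridAdj p q) :
    q = (p.1 + 1, p.2) ∨ q = (p.1 - 1, p.2) ∨ q = (p.1, p.2 + 1) ∨ q = (p.1, p.2 - 1) := by
  obtain ⟨a, b⟩ := p
  obtain ⟨c, d⟩ := q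
  simp only [GridAdj] at h
  simp only [Prod.mk.injEq]
  rcases abs_cases (a - c) with h1 | h1 <;> rcases abs_cases (b - d) with h2 | h2 <;> omega

lemma gridAdj_symm {p q : ℤ × ℤ} (h : GridAdj p q) : GridAdj q p := by
  simp only [GridAdj] at *
  rw [abs_sub_comm q.1, abs_sub_comm q.2]; exact h

/-- a set of points reachable from the upper right quadrant off `L` -/
inductive RReach (L : ℤ → ℤ → Prop) (A M : ℤ) : ℤ → ℤ → Prop
  | base (x y : ℤ) : A ≤ x → M ≤ y → ¬ L x y → RReach L A M x y
  | right (x y : ℤ) : RReach L A M x y → ¬ L (x+1) y → RReach L A M (x+1) y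
  | left (x y : ℤ) : RReach L A M (x+1) y → ¬ L x y → RReach L A M x y
  | up (x y : ℤ) : RReach L A M x y → ¬ L x (y+1) → RReach L A M x (y+1)
  | down (x y : ℤ) : RReach L A M x (y+1) → ¬ L x y → RReach L A M x y

lemma RReach.not_mem {L : ℤ → ℤ → Prop} {A M x y : ℤ} (h : RReach L A M x y) : ¬ L x y := by
  cases h <;> assumption

lemma RReach.mono {L L' : ℤ → ℤ → Prop} {A M : ℤ}
    (hd : ∀ x y, RReach L A M x y → ¬ L' x y) {x y : ℤ} (h : RReach L A M x y) :
    RReach L' A M x y := by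
  induction h with
  | base x y h1 h2 h3 => exact .base x y h1 h2 (hd _ _ (.base x y h1 h2 h3))
  | right x y h1 h2 ih => exact .right x y ih (hd _ _ (.right x y h1 h2))
  | left x y h1 h2 ih => exact .left x y ih (hd _ _ (.left x y h1 h2))
  | up x y h1 h2 ih => exact .up x y ih (hd _ _ (.up x y h1 h2))
  | down x y h1 h2 ih => exact .down x y ih (hd _ _ (.down x y h1 h2))

lemma abstract_contra (L : ℤ → ℤ → Prop) (v1 v2 : ℤ) (hv : 0 < v1)
    (conn : ∀ P : ℤ → ℤ → Prop,
      (∀ x y, L x y → L (x+1) y → (P x y ↔ P (x+1) y)) →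
      (∀ x y, L x y → L x (y+1) → (P x y ↔ P x (y+1))) →
      ∀ x y x' y', L x y → L x' y' → P x y → P x' y')
    (disj : ∀ x y, L x y → ¬ L (x + v1) (y + v2))
    (N a : ℤ) (top : ∀ x y, N ≤ y → (L x y ↔ x = a))
    (s : ℤ → ℤ → ℤ)
    (sh : ∀ x y, ¬ L x y → ¬ L (x+1) y → s (x+1) y = s x y)
    (sv : ∀ x y, ¬ L x y → ¬ L x (y+1) → s x (y+1) = s x y)
    (st : ∀ x y, N ≤ y → s x y = if a < x then 1 else 0)
    (n : ℕ) (p1 p2 : ℤ) (hp : L p1 p2)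
    (hpn : L (p1 + (n + 1) * v1) (p2 + (n + 1) * v2)) : False := by
  have disj' : ∀ x y, L x y → ¬ L (x - v1) (y - v2) := by
    intro x y h h'
    exact disj _ _ h' (by simpa using h)
  obtain ⟨M, hM⟩ : ∃ M, M = N + (n + 1) * |v2| := ⟨_, rfl⟩
  obtain ⟨A, hA⟩ : ∃ A, A = a + (n + 1) * v1 + 1 := ⟨_, rfl⟩
  have hMk : ∀ k : ℤ, 0 ≤ k → k ≤ n + 1 → ∀ y, M ≤ y → N ≤ y - k * v2 := by
    intro k h0 h1 y hy
    have : k * v2 ≤ (n + 1) * |v2| := by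
      have h2 : v2 ≤ |v2| := le_abs_self _
      have h3 : 0 ≤ |v2| := abs_nonneg _
      nlinarith
    omega
  have hAk : ∀ k : ℤ, k ≤ n + 1 → ∀ x, A ≤ x → a < x - k * v1 := by
    intro k h1 x hx
    have : k * v1 ≤ (n + 1) * v1 := by nlinarith
    omega
  let Lk : ℤ → ℤ → ℤ → Prop := fun k x y => L (x - k * v1) (y - k * v2)
  -- side of L on R
  have hR1 : ∀ k : ℤ, 0 ≤ k → k ≤ n + 1 → ∀ x y, RReach (Lk k) A M x y →
      s (x - k * v1) (y - k * v2) = 1 := by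
    intro k h0 h1 x y h
    induction h with
    | base x y h2 h3 h4 =>
      rw [st _ _ (hMk k h0 h1 y h3), if_pos (hAk k h1 x h2)]
    | right x y h2 h3 ih =>
      have h4 := h2.not_mem
      simp only [Lk] at h3 h4
      have e : x + 1 - k * v1 = (x - k * v1) + 1 := by ring
      rw [e] at h3 ⊢
      rw [sh _ _ h4 h3, ih]
    | left x y h2 h3 ih =>
      have h4 := h2.not_mem
      simp only [Lk] at h3 h4
      have e : x + 1 - k * v1 = (x - k * v1) + 1 := by ring
      rw [e] at h4 ih
      rw [← sh _ _ h3 h4, ih]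
    | up x y h2 h3 ih =>
      have h4 := h2.not_mem
      simp only [Lk] at h3 h4
      have e : y + 1 - k * v2 = (y - k * v2) + 1 := by ring
      rw [e] at h3 ⊢
      rw [sv _ _ h4 h3, ih]
    | down x y h2 h3 ih =>
      have h4 := h2.not_mem
      simp only [Lk] at h3 h4
      have e : y + 1 - k * v2 = (y - k * v2) + 1 := by ring
      rw [e] at h4 ih
      rw [← sv _ _ h3 h4, ih]
  -- L is left of L + v
  have hL0 : ∀ x y, L x y → s (x - v1) (y - v2) = 0 := by
    intro x y hxy
    have hy0 : N ≤ N + |v2| := by have := abs_nonneg v2; omega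
    have hy1 : N ≤ N + |v2| - v2 := by have := le_abs_self v2; omega
    refine conn (fun x y => s (x - v1) (y - v2) = 0) ?_ ?_ a (N + |v2|) x y
      ((top _ _ hy0).2 rfl) hxy ?_
    · intro x y h1 h2
      have h1 := disj' _ _ h1
      have h2 := disj' _ _ h2
      have e : x + 1 - v1 = (x - v1) + 1 := by ring
      rw [e] at h2
      simp only [e, sh _ _ h1 h2]
    · intro x y h1 h2
      have h1 := disj' _ _ h1
      have h2 := disj' _ _ h2
      have e : y + 1 - v2 = (y - v2) + 1 := by ring
      rw [e] at h2
      simp only [e, sv _ _ h1 h2]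
    · show s (a - v1) (N + |v2| - v2) = 0
      rw [st _ _ hy1, if_neg (by omega)]
  have hstep1 : ∀ k : ℤ, 0 ≤ k → k ≤ n → ∀ x y, RReach (Lk (k+1)) A M x y → ¬ Lk k x y := by
    intro k h0 h1 x y h h'
    have h2 := hR1 (k+1) (by omega) (by omega) x y h
    have h3 := hL0 _ _ h'
    have e1 : x - (k+1) * v1 = x - k * v1 - v1 := by ring
    have e2 : y - (k+1) * v2 = y - k * v2 - v2 := by ring
    rw [e1, e2, h3] at h2
    omega
  have hdown : ∀ k : ℕ, k ≤ n → ∀ x y, RReach (Lk k) A M x y → RReach (Lk 0) A M x y := by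
    intro k
    induction k with
    | zero => intro _ x y h; simpa using h
    | succ k ih =>
      intro hk x y h
      refine ih (by omega) x y ?_
      have := hstep1 k (by omega) (by omega)
      push_cast at h
      exact RReach.mono this h
  have hfin : RReach (Lk n) A M (p1 + (n+1) * v1) (p2 + (n+1) * v2) := by
    have tr : ∀ x y, L x y → ¬ Lk n (x + (n+1) * v1) (y + (n+1) * v2) := by
      intro x y h h'
      refine disj x y h ?_
      simp only [Lk] at h'
      convert h' using 1 <;> ring
    have hyM : N ≤ M - (n+1) * v2 := hMk (n+1) (by omega) le_rfl M le_rfl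
    refine conn (fun x y => RReach (Lk n) A M (x + (n+1) * v1) (y + (n+1) * v2)) ?_ ?_
      a (M - (n+1) * v2) p1 p2 ((top _ _ hyM).2 rfl) hp ?_
    · intro x y h1 h2
      have h1 := tr _ _ h1
      have h2 := tr _ _ h2
      have e : x + 1 + (n+1) * v1 = (x + (n+1) * v1) + 1 := by ring
      simp only [e] at h2 ⊢
      exact ⟨fun h => .right _ _ h h2, fun h => .left _ _ h h1⟩
    · intro x y h1 h2
      have h1 := tr _ _ h1
      have h2 := tr _ _ h2
      have e : y + 1 + (n+1) * v2 = (y + (n+1) * v2) + 1 := by ring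
      simp only [e] at h2 ⊢
      exact ⟨fun h => .up _ _ h h2, fun h => .down _ _ h h1⟩
    · have h1 := tr _ _ ((top _ _ hyM).2 rfl : L a (M - (n+1) * v2))
      refine .left _ _ (.base _ _ (by omega) (by omega) ?_) h1
      simp only [Lk]
      rw [top _ _ (hMk n (by omega) (by omega) _ (by omega))]
      intro h
      have : (n + 1 : ℤ) * v1 = n * v1 + v1 := by ring
      omega
  have := (hdown n le_rfl _ _ hfin).not_mem
  simp only [Lk] at this
  apply this
  simpa using hpn

set_option maxHeartbeats 4000000 in
lemma side_exists (S : Set (ℤ × ℤ)) (a b : ℤ × ℤ)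
    (h : Relation.ReflTransGen (fun a b => GridAdj a b ∧ a ∈ S ∧ b ∈ S) a b) :
    ∃ c : ℤ → ℤ → ℤ,
      (∀ x y, (x, y) ∉ S → c x (y+1) = c x y) ∧
      (∀ x y, (x, y) ∉ S → c (x+1) y - c x y =
        (if a.1 = x ∧ a.2 < y then 1 else 0) - (if b.1 = x ∧ b.2 < y then 1 else 0)) ∧
      ∃ N, ∀ x y, N ≤ y → c x y = (if x ≤ b.1 then 1 else 0) - (if x ≤ a.1 then 1 else 0) := by
  induction h with
  | refl => exact ⟨fun _ _ => 0, by simp, by simp, 0, by simp⟩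
  | @tail b b' _ hbb ih =>
    obtain ⟨c, h1, h2, N, h3⟩ := ih
    obtain ⟨hadj, hb, hb'⟩ := hbb
    obtain ⟨b1, b2⟩ := b
    have ne1 : ∀ x y, (x, y) ∉ S → ¬ (x = b1 ∧ y = b2) := by
      rintro x y h ⟨rfl, rfl⟩; exact h hb
    have ne2 : ∀ x y, (x, y) ∉ S → ¬ (x = b'.1 ∧ y = b'.2) := by
      rintro x y h ⟨rfl, rfl⟩; exact h hb'
    rcases gridAdj_cases hadj with rfl | rfl | rfl | rfl
    · refine ⟨fun x y => c x y + if x = b1 + 1 ∧ b2 < y then 1 else 0, ?_, ?_, max N (b2+1), ?_⟩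
      · intro x y hS
        have := h1 x y hS; have := ne1 x y hS; have := ne2 x y hS
        clear h1 h2 h3 ne1 ne2
        grind
      · intro x y hS
        have := h2 x y hS; have := ne1 x y hS; have := ne2 x y hS
        clear h1 h2 h3 ne1 ne2
        grind
      · intro x y hy
        have := h3 x y (by omega)
        clear h1 h2 h3 ne1 ne2
        grind
    · refine ⟨fun x y => c x y - if x = b1 ∧ b2 < y then 1 else 0, ?_, ?_, max N (b2+1), ?_⟩
      · intro x y hS
        have := h1 x y hS; have := ne1 x y hS; have := ne2 x y hS
        clear h1 h2 h3 ne1 ne2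
        grind
      · intro x y hS
        have := h2 x y hS; have := ne1 x y hS; have := ne2 x y hS
        clear h1 h2 h3 ne1 ne2
        grind
      · intro x y hy
        have := h3 x y (by omega)
        clear h1 h2 h3 ne1 ne2
        grind
    · refine ⟨c, h1, ?_, N, h3⟩
      intro x y hS
      have := h2 x y hS; have := ne1 x y hS; have := ne2 x y hS
      clear h1 h2 h3 ne1 ne2
      grind
    · refine ⟨c, h1, ?_, N, h3⟩
      intro x y hS
      have := h2 x y hS; have := ne1 x y hS; have := ne2 x y hS
      clear h1 h2 h3 ne1 ne2
      grind

lemma finite_sub (S : Set (ℤ × ℤ)) (p q : ℤ × ℤ) (hp : p ∈ S)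
    (h : Relation.ReflTransGen (fun a b => GridAdj a b ∧ a ∈ S ∧ b ∈ S) p q) :
    ∃ T : Set (ℤ × ℤ), T.Finite ∧ T ⊆ S ∧ p ∈ T ∧ q ∈ T ∧ GridConnected T := by
  induction h with
  | refl =>
    refine ⟨{p}, Set.finite_singleton p, by simpa using hp, rfl, rfl, ?_⟩
    rintro x rfl y rfl
    exact .refl
  | @tail b c _ hbc ih =>
    obtain ⟨T, hf, hs, h1, h2, h3⟩ := ih
    obtain ⟨hadj, hb, hc⟩ := hbc
    refine ⟨insert c T, hf.insert c, Set.insert_subset hc hs, .inr h1, .inl rfl, ?_⟩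
    have mono : ∀ x ∈ T, ∀ y ∈ T, Relation.ReflTransGen
        (fun a b => GridAdj a b ∧ a ∈ insert c T ∧ b ∈ insert c T) x y := by
      intro x hx y hy
      exact Relation.ReflTransGen.mono (fun a b h => ⟨h.1, .inr h.2.1, .inr h.2.2⟩) _ _ (h3 x hx y hy)
    have s1 : Relation.ReflTransGen
        (fun a b => GridAdj a b ∧ a ∈ insert c T ∧ b ∈ insert c T) b c :=
      .single ⟨hadj, .inr h2, .inl rfl⟩
    have s2 : Relation.ReflTransGen
        (fun a b => GridAdj a b ∧ a ∈ insert c T ∧ b ∈ insert c T) c b :=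
      .single ⟨gridAdj_symm hadj, .inl rfl, .inr h2⟩
    rintro x (rfl | hx) y (rfl | hy)
    · exact .refl
    · exact s2.trans (mono _ h2 _ hy)
    · exact (mono _ hx _ h2).trans s1
    · exact mono _ hx _ hy

lemma main_pos (S : Set (ℤ × ℤ)) (hconn : GridConnected S)
    (v1 v2 : ℤ) (hv : 0 < v1) (n : ℕ)
    (p : ℤ × ℤ) (hp : p ∈ S) (hpn : (p.1 + (n+1) * v1, p.2 + (n+1) * v2) ∈ S) :
    ∃ q ∈ S, (q.1 + v1, q.2 + v2) ∈ S := by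
  by_contra hcon
  push Not at hcon
  obtain ⟨T, hf, hs, h1, h2, h3⟩ := finite_sub S _ _ hp (hconn _ hp _ hpn)
  have hd : ∀ q ∈ T, (q.1 + v1, q.2 + v2) ∉ T := fun q hq h => hcon q (hs hq) (hs h)
  obtain ⟨⟨a1, a2⟩, ha, hamax⟩ := Set.exists_max_image T (fun q => v1 * q.2 - v2 * q.1) hf ⟨p, h1⟩
  obtain ⟨⟨b1, b2⟩, hb, hbmin⟩ := Set.exists_min_image T (fun q => v1 * q.2 - v2 * q.1) hf ⟨p, h1⟩
  obtain ⟨⟨t1, t2⟩, ht, htmax⟩ := Set.exists_max_image T (fun q => q.2) hf ⟨p, h1⟩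
  simp only at hamax hbmin htmax
  obtain ⟨c, c1, c2, N, c3⟩ := side_exists T _ _ (h3 _ ha _ hb)
  simp only at c2 c3
  let L : ℤ → ℤ → Prop := fun x y => (x, y) ∈ T ∨ (x = a1 ∧ a2 ≤ y) ∨ (x = b1 ∧ y ≤ b2)
  have hbt := htmax _ hb
  have hat := htmax _ ha
  simp only at hbt hat
  refine abstract_contra L v1 v2 hv ?_ ?_ (max N (t2 + 1)) a1 ?_
    (fun x y => (if b1 < x then 1 else 0) + c x y) ?_ ?_ ?_ n p.1 p.2 (.inl h1) (.inl h2)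
  · intro P hh hvv
    have hT : ∀ q ∈ T, ∀ r ∈ T, P q.1 q.2 ↔ P r.1 r.2 := by
      intro q hq r hr
      have := h3 q hq r hr
      clear hr
      induction this with
      | refl => rfl
      | @tail r r' _ h ih =>
        obtain ⟨hadj, hr, hr'⟩ := h
        refine ih.trans ?_
        rcases gridAdj_cases hadj with rfl | rfl | rfl | rfl
        · exact hh _ _ (.inl hr) (.inl hr')
        · have := hh (r.1 - 1) r.2 (.inl hr') (.inl (by simpa using hr))
          simpa using this.symm
        · exact hvv _ _ (.inl hr) (.inl hr')
        · have := hvv r.1 (r.2 - 1) (.inl hr') (.inl (by simpa using hr))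
          simpa using this.symm
    have key : ∀ x y, L x y → (P x y ↔ P a1 a2) := by
      rintro x y (h | ⟨rfl, h⟩ | ⟨rfl, h⟩)
      · exact hT _ h _ ha
      · induction y, h using Int.leInduction with
        | base => rfl
        | succ y hy ih =>
          exact (hvv _ _ (.inr (.inl ⟨rfl, hy⟩)) (.inr (.inl ⟨rfl, by omega⟩))).symm.trans ih
      · refine Iff.trans ?_ (hT _ hb _ ha)
        induction y, h using Int.leInductionDown with
        | base => rfl
        | pred y hy ih =>
          have := hvv x (y-1) (.inr (.inr ⟨rfl, by omega⟩)) (.inr (.inr ⟨rfl, by omega⟩))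
          rw [sub_add_cancel] at this
          exact this.trans ih
    intro x y x' y' h h' hP
    exact (key _ _ h').2 ((key _ _ h).1 hP)
  · have hab := hamax _ hb
    simp only at hab
    rintro x y (h | ⟨rfl, h⟩ | ⟨rfl, h⟩) (h' | ⟨h1', h'⟩ | ⟨h1', h'⟩)
    · exact hd _ h h'
    · have m := hamax _ h
      simp only at m
      have e : y + v2 = a2 := by subst h1'; nlinarith
      exact hd _ h (by simpa [h1', e] using ha)
    · have m := hbmin _ h
      simp only at m
      have e : y + v2 = b2 := by subst h1'; nlinarith
      exact hd _ h (by simpa [h1', e] using hb)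
    · have m := hamax _ h'
      simp only at m
      have e : y = a2 := by nlinarith
      subst e
      exact hd _ ha h'
    · omega
    · have e : y = a2 := by subst h1'; nlinarith
      have e' : y + v2 = b2 := by subst h1'; nlinarith
      subst e
      exact hd _ ha (by simpa [h1', e'] using hb)
    · have m := hbmin _ h'
      simp only at m
      have e : y = b2 := by nlinarith
      subst e
      exact hd _ hb h'
    · have e : y = b2 := by subst h1'; nlinarith
      have e' : y + v2 = a2 := by subst h1'; nlinarith
      subst e
      exact hd _ hb (by simpa [h1', e'] using ha)
    · omega
  · intro x y hy
    constructor
    · rintro (h | h | h)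
      · have := htmax _ h
        simp only at this
        omega
      · exact h.1
      · omega
    · intro h
      exact .inr (.inl ⟨h, by omega⟩)
  · intro x y h h'
    simp only [L, not_or] at h h'
    have := c2 x y h.1
    grind
  · intro x y h h'
    simp only [L, not_or] at h h'
    have := c1 x y h.1
    grind
  · intro x y hy
    have := c3 x y (by omega)
    grind

lemma main_ne (S : Set (ℤ × ℤ)) (hconn : GridConnected S)
    (v1 v2 : ℤ) (hv : v1 ≠ 0) (n : ℕ)
    (p : ℤ × ℤ) (hp : p ∈ S) (hpn : (p.1 + (n+1) * v1, p.2 + (n+1) * v2) ∈ S) :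
    ∃ q ∈ S, (q.1 + v1, q.2 + v2) ∈ S := by
  rcases lt_or_gt_of_ne hv with h | h
  · obtain ⟨q, hq, hq'⟩ := main_pos S hconn (-v1) (-v2) (by omega) n _ hpn (by simpa using hp)
    exact ⟨_, hq', by simpa using hq⟩
  · exact main_pos S hconn v1 v2 h n p hp hpn

lemma main_all (S : Set (ℤ × ℤ)) (hconn : GridConnected S)
    (v1 v2 : ℤ) (hv : v1 ≠ 0 ∨ v2 ≠ 0) (n : ℕ)
    (p : ℤ × ℤ) (hp : p ∈ S) (hpn : (p.1 + (n+1) * v1, p.2 + (n+1) * v2) ∈ S) :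
    ∃ q ∈ S, (q.1 + v1, q.2 + v2) ∈ S := by
  rcases hv with hv | hv
  · exact main_ne S hconn v1 v2 hv n p hp hpn
  · obtain ⟨q, hq, hq'⟩ := main_ne (Prod.swap ⁻¹' S) (by
      intro x hx y hy
      have := hconn _ hx _ hy
      have h2 := this.lift (p := fun a b => GridAdj a b ∧ a ∈ Prod.swap ⁻¹' S ∧
        b ∈ Prod.swap ⁻¹' S) Prod.swap (by
          rintro a b ⟨h, h1, h2⟩
          refine ⟨?_, by simpa using h1, by simpa using h2⟩
          simp only [GridAdj, Prod.fst_swap, Prod.snd_swap] at *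
          omega)
      simpa [Function.onFun] using h2) v2 v1 hv n p.swap (by simpa using hp) (by simpa using hpn)
    exact ⟨q.swap, hq, hq'⟩

/-- If a nonempty grid-connected set `S` contains both `p` and `p + n • v` for a
nonzero vector `v` and an integer `n ≥ 1`, then `S` intersects `S + v`. -/
theorem connected_set_intersects_translate (S : Set (ℤ × ℤ))
    (hne : S.Nonempty) (hconn : GridConnected S)
    (v : ℤ × ℤ) (hv : v ≠ 0) (n : ℕ) (hn : 1 ≤ n)
    (p : ℤ × ℤ) (hp : p ∈ S) (hpn : p + n • v ∈ S) :
    (S ∩ setTranslate S v).Nonempty := by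
  obtain ⟨m, rfl⟩ : ∃ m, n = m + 1 := ⟨n - 1, by omega⟩
  have hv' : v.1 ≠ 0 ∨ v.2 ≠ 0 := by
    by_contra h
    push Not at h
    exact hv (Prod.ext h.1 h.2)
  have e : p + (m + 1) • v = (p.1 + ((m : ℤ) + 1) * v.1, p.2 + ((m : ℤ) + 1) * v.2) := by
    ext <;> simp
  rw [e] at hpn
  obtain ⟨q, hq, hq'⟩ := main_all S hconn v.1 v.2 hv' m p hp hpn
  exact ⟨q + v, hq', q, hq, rfl⟩
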